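/- arXiv:2007.02094 — 2 statements merged into one kernel-verified Lean document; each statement's English description precedes it below -/
import Mathlib

section
/- Fix k ∈ ℕ* and assume condition (N). Let G = (G_i) ∈ (L¹₊(Ω))^p be given, and let g, h ∈ (L¹₊(Ω))^p satisfy 0 ≤ g_i ≤ h_i in Ω, the two transport systems v_i·∇h_i = G_i − Σ_{j,l,m} Γ_{ij}^{lm} (h_i/(1 + h_i/k)) (g_j/(1 + g_j/k)) and v_i·∇g_i = G_i − Σ_{j,l,m} Γ_{ij}^{lm} (g_i/(1 + g_i/k)) (h_j/(1 + h_j/k)) in Ω (in the mild sense along characteristics), together with equal ingoing boundary values (h_i − g_i)(z_i^+(z)) = 0 for a.a. z ∈ Ω, 1 ≤ i ≤ p. Then g = h a.e. in Ω. -/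
open MeasureTheory Real Set Filter Topology
open scoped InnerProductSpace ENNReal

noncomputable section

abbrev E2 := EuclideanSpace ℝ (Fin 2)

/-- The `v`-ingoing part of the boundary of `Ω`, where `n` is the unit inward normal field. -/
def bdryIn (Ω : Set E2) (n : E2 → E2) (v : E2) : Set E2 :=
  {Z | Z ∈ frontier Ω ∧ 0 < ⟪v, n Z⟫_ℝ}

/-- The `v`-outgoing part of the boundary of `Ω`. -/
def bdryOut (Ω : Set E2) (n : E2 → E2) (v : E2) : Set E2 :=
  {Z | Z ∈ frontier Ω ∧ ⟪v, n Z⟫_ℝ < 0}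

/-- `s_i^+(z)`: backward exit time from `z` in direction `v`. -/
def sPlus (Ω : Set E2) (n : E2 → E2) (v : E2) (z : E2) : ℝ :=
  sInf {s : ℝ | 0 < s ∧ z - s • v ∈ bdryIn Ω n v}

/-- `s_i^-(z)`: forward exit time from `z` in direction `v`. -/
def sMinus (Ω : Set E2) (n : E2 → E2) (v : E2) (z : E2) : ℝ :=
  sInf {s : ℝ | 0 < s ∧ z + s • v ∈ bdryOut Ω n v}

/-- `z_i^+(z)`: the ingoing boundary point of the characteristic through `z` in direction `v`. -/
def zPlus (Ω : Set E2) (n : E2 → E2) (v : E2) (z : E2) : E2 :=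
  z - sPlus Ω n v z • v

/-- `Ω` is a bounded open strictly convex planar domain with `C¹` boundary,
with unit inward normal field `n`. -/
def GoodDomain (Ω : Set E2) (n : E2 → E2) : Prop :=
  IsOpen Ω ∧ Ω.Nonempty ∧ Bornology.IsBounded Ω ∧ StrictConvex ℝ Ω ∧
  ContinuousOn n (frontier Ω) ∧ (∀ Z ∈ frontier Ω, ‖n Z‖ = 1) ∧
  (∀ Z ∈ frontier Ω, ∃ ε > 0, ∀ t ∈ Set.Ioo (0:ℝ) ε, Z + t • n Z ∈ Ω)

/-- Nonnegativity, symmetries and conservation laws for the collision coefficients. -/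
def GammaOK {p : ℕ} (v : Fin p → E2) (Γ : Fin p → Fin p → Fin p → Fin p → ℝ) : Prop :=
  (∀ i j l m, 0 ≤ Γ i j l m) ∧
  (∀ i j l m, Γ i j l m = Γ j i l m) ∧
  (∀ i j l m, Γ i j l m = Γ l m i j) ∧
  (∀ i j l m, 0 < Γ i j l m →
    v i + v j = v l + v m ∧ ‖v i‖ ^ 2 + ‖v j‖ ^ 2 = ‖v l‖ ^ 2 + ‖v m‖ ^ 2)

/-- Condition (G): no two of the velocities are parallel. -/
def CondG {p : ℕ} (v : Fin p → E2) : Prop :=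
  ∀ i j, i ≠ j → LinearIndependent ℝ ![v i, v j]

/-- Condition (N): all velocities have positive component along some direction `n₀`. -/
def CondN {p : ℕ} (v : Fin p → E2) : Prop :=
  ∃ n0 : E2, ∀ i, 0 < ⟪v i, n0⟫_ℝ

/-- Membership in `L¹₊(Ω)`. -/
def L1plus (Ω : Set E2) (f : E2 → ℝ) : Prop :=
  IntegrableOn f Ω volume ∧ ∀ᵐ z ∂(volume.restrict Ω), 0 ≤ f z

/-- Nonnegative ingoing boundary data with finite mass and entropy inflow. -/
def GoodBdryData (Ω : Set E2) (n : E2 → E2) {p : ℕ} (v : Fin p → E2)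
    (fb : Fin p → E2 → ℝ) : Prop :=
  ∀ i, (∀ z ∈ bdryIn Ω n (v i), 0 ≤ fb i z) ∧
    IntegrableOn (fun z => ⟪v i, n z⟫_ℝ * fb i z * (1 + Real.log (fb i z)))
      (bdryIn Ω n (v i)) (μH[1] : Measure E2)

/-- The truncation `x ↦ x/(1 + x/k)`. -/
def trunc (k x : ℝ) : ℝ := x / (1 + x / k)

/-- The collision operator `Q_i(f)`. -/
def Qcol {p : ℕ} (Γ : Fin p → Fin p → Fin p → Fin p → ℝ) (f : Fin p → E2 → ℝ)
    (i : Fin p) (z : E2) : ℝ :=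
  ∑ j, ∑ l, ∑ m, Γ i j l m * (f l z * f m z - f i z * f j z)

/-- The truncated gain term `Q_i^{+k}(F)`. -/
def QplusK {p : ℕ} (k : ℝ) (Γ : Fin p → Fin p → Fin p → Fin p → ℝ)
    (F : Fin p → E2 → ℝ) (i : Fin p) (z : E2) : ℝ :=
  ∑ j, ∑ l, ∑ m, Γ i j l m * (trunc k (F l z) * trunc k (F m z))

/-- The truncated collision frequency `ν_i^k(F)`. -/
def nuK {p : ℕ} (k : ℝ) (Γ : Fin p → Fin p → Fin p → Fin p → ℝ)
    (F : Fin p → E2 → ℝ) (i : Fin p) (z : E2) : ℝ :=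
  ∑ j, ∑ l, ∑ m, Γ i j l m * (F j z / ((1 + F i z / k) * (1 + F j z / k)))

/-- A smooth mollifier supported in the ball of radius `α`. -/
def IsMollifier (α : ℝ) (μ : E2 → ℝ) : Prop :=
  ContDiff ℝ (⊤ : ℕ∞) μ ∧ (∀ x, 0 ≤ μ x) ∧ tsupport μ ⊆ Metric.ball 0 α ∧ (∫ x, μ x) = 1

/-- Convolution `(g ∗ μ)(z) = ∫ μ(z - y) g(y) dy`. -/
def convWith (μ g : E2 → ℝ) (z : E2) : ℝ := ∫ y, μ (z - y) * g y

/-- The smoothed truncated ingoing boundary data `f^k_{bi}`. -/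
def GoodTruncData (Ω : Set E2) {p : ℕ} (k : ℝ) (fkb : Fin p → E2 → ℝ) : Prop :=
  ∀ i, ContinuousOn (fkb i) (frontier Ω) ∧ ∀ z ∈ frontier Ω, 0 ≤ fkb i z ∧ fkb i z ≤ k / 2

/-- The constant `c_α`. -/
def cAlpha (Ω : Set E2) (n : E2 → E2) {p : ℕ} (v : Fin p → E2)
    (fb : Fin p → E2 → ℝ) (α : ℝ) : ℝ :=
  (1 / α) * ∑ i, ∫ z in bdryIn Ω n (v i), ⟪n z, v i⟫_ℝ * fb i z ∂(μH[1] : Measure E2)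

/-- The set `K_α`. -/
def Kalpha (Ω : Set E2) (n : E2 → E2) {p : ℕ} (v : Fin p → E2)
    (fb : Fin p → E2 → ℝ) (α : ℝ) : Set (Fin p → E2 → ℝ) :=
  {f | (∀ i, L1plus Ω (f i)) ∧ (∑ i, ∫ z in Ω, f i z) ≤ cAlpha Ω n v fb α}

/-- Right hand side of the damped, convolved, truncated equation with unknown `F` and
frozen convolved argument `f`. -/
def DampedRHS {p : ℕ} (k : ℝ) (μα : E2 → ℝ) (ext : (E2 → ℝ) → E2 → ℝ)
    (Γ : Fin p → Fin p → Fin p → Fin p → ℝ) (F f : Fin p → E2 → ℝ)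
    (i : Fin p) (z : E2) : ℝ :=
  ∑ j, ∑ l, ∑ m, Γ i j l m *
    (trunc k (F l z) * trunc k (convWith μα (ext (f m)) z) -
     trunc k (F i z) * trunc k (convWith μα (ext (f j)) z))

/-- `F` is a mild (exponential-form) solution of the damped, convolved, truncated problem
`α F_i + v_i·∇F_i = DampedRHS`, with ingoing boundary data `fkb`. -/
def IsMildDamped (Ω : Set E2) (n : E2 → E2) {p : ℕ} (v : Fin p → E2)
    (k α : ℝ) (μα : E2 → ℝ) (ext : (E2 → ℝ) → E2 → ℝ)
    (Γ : Fin p → Fin p → Fin p → Fin p → ℝ) (fkb : Fin p → E2 → ℝ)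
    (F f : Fin p → E2 → ℝ) : Prop :=
  ∀ i, ∀ᵐ z ∂(volume.restrict Ω),
    F i z = fkb i (zPlus Ω n (v i) z) * Real.exp (-(α * sPlus Ω n (v i) z)) +
      ∫ s in (0:ℝ)..(sPlus Ω n (v i) z),
        Real.exp (α * (s - sPlus Ω n (v i) z)) *
          DampedRHS k μα ext Γ F f i (zPlus Ω n (v i) z + s • v i)

/-- `F` is a mild solution of the truncated problem
`v_i·∇F_i = Q_i^{+k}(F) − F_i ν_i^k(F)` with ingoing boundary data `fkb`,
the mild form holding at every point of `Ω`. -/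
def IsMildTrunc (Ω : Set E2) (n : E2 → E2) {p : ℕ} (v : Fin p → E2)
    (k : ℝ) (Γ : Fin p → Fin p → Fin p → Fin p → ℝ) (fkb : Fin p → E2 → ℝ)
    (F : Fin p → E2 → ℝ) : Prop :=
  ∀ i, ∀ z ∈ Ω,
    F i z = fkb i (zPlus Ω n (v i) z) +
      ∫ s in (0:ℝ)..(sPlus Ω n (v i) z),
        (QplusK k Γ F i (zPlus Ω n (v i) z + s • v i) -
         F i (zPlus Ω n (v i) z + s • v i) * nuK k Γ F i (zPlus Ω n (v i) z + s • v i))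

lemma mp_shear (v : E2) : MeasurePreserving (fun q : E2 × ℝ => (q.1 - q.2 • v, q.2))
    ((volume : Measure E2).prod (volume : Measure ℝ))
    ((volume : Measure E2).prod (volume : Measure ℝ)) := by
  have h1 : MeasurePreserving (fun q : ℝ × E2 => (q.1, q.2 - q.1 • v))
      ((volume : Measure ℝ).prod (volume : Measure E2))
      ((volume : Measure ℝ).prod (volume : Measure E2)) := by
    refine MeasurePreserving.skew_product (f := fun s : ℝ => s)
      (g := fun s z => z - s • v) (MeasurePreserving.id _) ?_ ?_
    · fun_prop
    · refine Eventually.of_forall fun s => ?_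
      simpa [sub_eq_add_neg] using map_add_right_eq_self (volume : Measure E2) (-(s • v))
  exact (Measure.measurePreserving_swap.comp h1).comp Measure.measurePreserving_swap

lemma ae_line (v : E2) (P : E2 → Prop) (hP : ∀ᵐ z, P z) :
    ∀ᵐ z : E2, ∀ᵐ s : ℝ, P (z - s • v) := by
  have h1 : ∀ᵐ q ∂((volume : Measure E2).prod (volume : Measure ℝ)), P q.1 :=
    Measure.quasiMeasurePreserving_fst.ae hP
  have h2 := (mp_shear v).quasiMeasurePreserving.ae h1
  exact Measure.ae_ae_of_ae_prod h2

lemma integrable_line (v : E2) (f : E2 → ℝ) (hf : Integrable f) :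
    ∀ᵐ z : E2, ∀ N : ℕ, IntegrableOn (fun s : ℝ => f (z - s • v)) (Ioo 0 (N:ℝ)) := by
  rw [ae_all_iff]
  intro N
  have h1 : Integrable (fun q : E2 × ℝ => f q.1 * (Ioo (0:ℝ) N).indicator (fun _ => (1:ℝ)) q.2)
      ((volume : Measure E2).prod (volume : Measure ℝ)) := by
    refine hf.mul_prod ?_
    rw [integrable_indicator_iff measurableSet_Ioo]
    simp
  have h2 := (mp_shear v).integrable_comp_of_integrable h1
  filter_upwards [h2.prod_right_ae] with z hz
  rw [← integrable_indicator_iff measurableSet_Ioo]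
  refine hz.congr (Eventually.of_forall fun s => ?_)
  by_cases hs : s ∈ Ioo (0:ℝ) N <;> simp [hs, -mem_Ioo]

lemma balance (v n0 : E2) (hc : 0 < ⟪v, n0⟫_ℝ) (S : E2 → ℝ) (hS : Measurable S) (M : ℝ)
    (hSi : Integrable S)
    (hM : ∀ z, S z ≠ 0 → |⟪z, n0⟫_ℝ| ≤ M) :
    IntegrableOn (fun z => ∫ s in Ioi (0:ℝ), S (z - s • v)) {z | ⟪z, n0⟫_ℝ ≤ M} ∧
    ⟪v, n0⟫_ℝ * ∫ z in {z | ⟪z, n0⟫_ℝ ≤ M}, ∫ s in Ioi (0:ℝ), S (z - s • v)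
      = ∫ y, S y * (M - ⟪y, n0⟫_ℝ) := by
  set c := ⟪v, n0⟫_ℝ with hcdef
  set B : Set E2 := {z | ⟪z, n0⟫_ℝ ≤ M} with hB
  have hBm : MeasurableSet B := measurableSet_le (by fun_prop) (by fun_prop)
  -- integrand on product in variables (y,s)
  let K : E2 × ℝ → ℝ := fun q =>
    S q.1 * (Ioc (0:ℝ) ((M - ⟪q.1, n0⟫_ℝ) / c)).indicator (fun _ => (1:ℝ)) q.2
  have hKm : Measurable K := by
    have : K = fun q => S q.1 * {q : E2 × ℝ | 0 < q.2 ∧ q.2 ≤ (M - ⟪q.1, n0⟫_ℝ) / c}.indicator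
        (fun _ => (1:ℝ)) q := by
      funext q
      simp only [K, indicator, mem_Ioc, mem_ofPred_eq]
    rw [this]
    refine (hS.comp measurable_fst).mul (measurable_const.indicator ?_)
    have m1 : MeasurableSet {q : E2 × ℝ | 0 < q.2} :=
      measurableSet_lt (by fun_prop) (by fun_prop)
    have m2 : MeasurableSet {q : E2 × ℝ | q.2 ≤ (M - ⟪q.1, n0⟫_ℝ) / c} :=
      measurableSet_le (by fun_prop) (by fun_prop)
    exact m1.inter m2
  have hKi : Integrable K ((volume : Measure E2).prod (volume : Measure ℝ)) := by
    have h1 : Integrable (fun q : E2 × ℝ => S q.1 *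
        (Ioc (0:ℝ) (2 * M / c)).indicator (fun _ => (1:ℝ)) q.2)
        ((volume : Measure E2).prod (volume : Measure ℝ)) := by
      refine hSi.mul_prod ?_
      rw [integrable_indicator_iff measurableSet_Ioc]
      simp
    refine h1.mono hKm.aestronglyMeasurable (Eventually.of_forall fun q => ?_)
    simp only [K, norm_mul]
    by_cases h0 : S q.1 = 0
    · simp [h0]
    refine mul_le_mul_of_nonneg_left ?_ (norm_nonneg _)
    by_cases hq : q.2 ∈ Ioc (0:ℝ) ((M - ⟪q.1, n0⟫_ℝ) / c)
    · have : q.2 ∈ Ioc (0:ℝ) (2 * M / c) := by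
        refine ⟨hq.1, hq.2.trans ?_⟩
        have := abs_le.1 (hM _ h0)
        gcongr
        linarith
      simp [hq, this, -mem_Ioc]
    · simp [hq, -mem_Ioc]
  have hK2 := (mp_shear v).integrable_comp_of_integrable hKi
  have hK2eq : ∀ z s, K (z - s • v, s) = B.indicator (fun _ => (1:ℝ)) z *
      (Ioi (0:ℝ)).indicator (fun s => S (z - s • v)) s := by
    intro z s
    have : s ∈ Ioc (0:ℝ) ((M - ⟪z - s • v, n0⟫_ℝ) / c) ↔ (z ∈ B ∧ s ∈ Ioi (0:ℝ)) := by
      rw [mem_Ioc, le_div_iff₀ hc, inner_sub_left, real_inner_smul_left, ← hcdef]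
      simp only [hB, mem_ofPred_eq, mem_Ioi]
      constructor
      · rintro ⟨a, b⟩; exact ⟨by linarith, a⟩
      · rintro ⟨a, b⟩; exact ⟨b, by linarith⟩
    simp only [K]
    by_cases h1 : z ∈ B <;> by_cases h2 : s ∈ Ioi (0:ℝ) <;>
      simp only [indicator, this, h1, h2] <;> simp
  have hinner : ∀ z, ∫ s, K (z - s • v, s) =
      B.indicator (fun z => ∫ s in Ioi (0:ℝ), S (z - s • v)) z := by
    intro z
    simp_rw [hK2eq]
    rw [integral_const_mul, integral_indicator measurableSet_Ioi]
    by_cases h1 : z ∈ B <;> simp [h1]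
  have hinner2 : ∀ y, ∫ s, K (y, s) = S y * ((M - ⟪y, n0⟫_ℝ) / c) := by
    intro y
    simp only [K]
    rw [integral_const_mul, integral_indicator measurableSet_Ioc]
    by_cases h0 : S y = 0
    · simp [h0]
    have := abs_le.1 (hM _ h0)
    have h3 : 0 ≤ (M - ⟪y, n0⟫_ℝ) / c := div_nonneg (by linarith) hc.le
    simp [h3]
  constructor
  · rw [← integrable_indicator_iff hBm]
    refine hK2.integral_prod_left.congr (Eventually.of_forall fun z => ?_)
    exact hinner z
  · rw [← integral_indicator hBm]
    simp_rw [← hinner]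
    have e1 := integral_prod _ hK2
    have e2 := integral_prod _ hKi
    have e3 : ∫ q, K ((fun q : E2 × ℝ => (q.1 - q.2 • v, q.2)) q)
        ∂((volume : Measure E2).prod (volume : Measure ℝ)) =
        ∫ q, K q ∂((volume : Measure E2).prod (volume : Measure ℝ)) := by
      have := (mp_shear v).map_eq
      conv_rhs => rw [← this]
      rw [integral_map (mp_shear v).measurable.aemeasurable hKm.aestronglyMeasurable]
    have e4 : ∫ z, ∫ s, K (z - s • v, s) = ∫ y, S y * ((M - ⟪y, n0⟫_ℝ) / c) := by
      simp_rw [← hinner2]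
      rw [← e2, ← e3]
      exact e1.symm
    rw [e4, ← integral_const_mul]
    congr 1
    funext y
    field_simp

/-- one dimensional nonnegativity -/
lemma nonneg_1d (r : ℝ → ℝ) (A : Set ℝ) (hA : IsOpen A) (hr : IntegrableOn r (Ioi 0))
    (h0 : ∀ s, s ∉ A → r s = 0)
    (hpos : ∀ᵐ t : ℝ, t ∈ A → 0 < t → 0 ≤ ∫ s in Ioi t, r s) :
    0 ≤ ∫ s in Ioi (0:ℝ), r s := by
  by_contra hneg
  push Not at hneg
  set A' := A ∩ Ioi 0 with hA'
  by_cases hne : A'.Nonempty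
  swap
  · have : ∫ s in Ioi (0:ℝ), r s = 0 := by
      refine setIntegral_eq_zero_of_forall_eq_zero fun s hs => h0 s fun hsA => hne ⟨s, hsA, hs⟩
    linarith
  have hbdd : BddBelow A' := ⟨0, fun x hx => hx.2.le⟩
  set a := sInf A' with ha
  have ha0 : 0 ≤ a := le_csInf hne fun x hx => hx.2.le
  have hsplit : ∀ t, 0 ≤ t → ∫ s in Ioi (0:ℝ), r s = (∫ s in (0:ℝ)..t, r s) + ∫ s in Ioi t, r s := by
    intro t ht
    rw [intervalIntegral.integral_of_le ht, ← setIntegral_union (by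
        rw [Set.disjoint_left]; intro x hx hx'; exact absurd hx.2 (not_le.2 hx')) measurableSet_Ioi
        (hr.mono_set Ioc_subset_Ioi_self) (hr.mono_set (Ioi_subset_Ioi ht)), Ioc_union_Ioi_eq_Ioi ht]
  let r' := (Ioi (0:ℝ)).indicator r
  have hr' : Integrable r' := (integrable_indicator_iff measurableSet_Ioi).2 hr
  let P : ℝ → ℝ := fun t => ∫ s in (0:ℝ)..t, r' s
  have hP : Continuous P := intervalIntegral.continuous_primitive (fun a b => hr'.intervalIntegrable) 0
  have hPeq : ∀ t, 0 ≤ t → ∫ s in (0:ℝ)..t, r s = P t := by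
    intro t ht
    simp only [P]
    rw [intervalIntegral.integral_of_le ht, intervalIntegral.integral_of_le ht]
    refine setIntegral_congr_fun measurableSet_Ioc fun s hs => ?_
    have : s ∈ Ioi (0:ℝ) := hs.1
    simp [r', this, -mem_Ioi]
  have hPa : P a = 0 := by
    rw [← hPeq a ha0, intervalIntegral.integral_of_le ha0, integral_Ioc_eq_integral_Ioo]
    refine setIntegral_eq_zero_of_forall_eq_zero fun s hs => h0 s fun hsA => ?_
    exact absurd (csInf_le hbdd (⟨hsA, hs.1⟩ : s ∈ A')) (not_le.2 hs.2)
  -- near a, P t > ∫ r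
  have hev : ∀ᶠ t in 𝓝 a, ∫ s in Ioi (0:ℝ), r s < P t := by
    refine hP.continuousAt.eventually (lt_mem_nhds ?_)
    rw [hPa]; exact hneg
  obtain ⟨U, hUsub, hUo, haU⟩ := mem_nhds_iff.1 hev
  have hmem : a ∈ closure A' := csInf_mem_closure hne hbdd
  have hUA : (U ∩ A').Nonempty := mem_closure_iff.1 hmem U hUo haU
  have hopen : IsOpen (U ∩ A') := hUo.inter (hA.inter isOpen_Ioi)
  have : ∃ t ∈ U ∩ A', t ∈ A → 0 < t → 0 ≤ ∫ s in Ioi t, r s := by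
    by_contra hcon
    push Not at hcon
    have h1 : volume (U ∩ A') = 0 := by
      refine measure_mono_null ?_ hpos
      intro t ht
      have := hcon t ht
      simp only [mem_compl_iff, mem_ofPred_eq]
      push Not
      exact this
    exact (hopen.measure_pos volume hUA).ne' h1
  obtain ⟨t, ht, htp⟩ := this
  have h1 := htp ht.2.1 ht.2.2
  have h2 : ∫ s in Ioi (0:ℝ), r s < P t := hUsub ht.1
  have h3 := hsplit t (le_of_lt ht.2.2)
  rw [hPeq t (le_of_lt ht.2.2)] at h3
  linarith

lemma nonneg_out (v : E2) (Ω : Set E2) (hΩ : IsOpen Ω) (S : E2 → ℝ)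
    (hint : ∀ z, IntegrableOn (fun s : ℝ => S (z - s • v)) (Ioi 0))
    (h0 : ∀ z, z ∉ Ω → S z = 0)
    (hpos : ∀ᵐ z : E2, z ∈ Ω → 0 ≤ ∫ s in Ioi (0:ℝ), S (z - s • v)) :
    ∀ᵐ z : E2, 0 ≤ ∫ s in Ioi (0:ℝ), S (z - s • v) := by
  filter_upwards [ae_line v _ hpos] with z hz
  refine nonneg_1d _ {s | z - s • v ∈ Ω} (hΩ.preimage (by fun_prop)) (hint z) (fun s hs => h0 _ hs) ?_
  filter_upwards [hz] with t ht htA _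
  have h1 := ht htA
  have h2 : ∫ s in Ioi t, S (z - s • v) = ∫ s in Ioi (0:ℝ), S (z - t • v - s • v) := by
    have e := (measurePreserving_add_left (volume : Measure ℝ) t).setIntegral_preimage_emb
      (measurableEmbedding_addLeft t) (fun s => S (z - s • v)) (Ioi t)
    rw [← e]
    have e2 : (fun x => t + x) ⁻¹' Ioi t = Ioi (0:ℝ) := by
      ext x; simp
    rw [e2]
    refine setIntegral_congr_fun measurableSet_Ioi fun s _ => ?_
    simp only [add_smul, sub_sub]
  rw [h2]; exact h1
lemma line_geom {Ω : Set E2} (hO : IsOpen Ω) (hC : Convex ℝ Ω) {v z : E2} (hz : z ∈ Ω) {s1 : ℝ}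
    (h1 : 0 < s1) (hf : z - s1 • v ∈ closure Ω) {s : ℝ} (hs0 : 0 ≤ s) (hs : s < s1) :
    z - s • v ∈ Ω := by
  rcases hs0.eq_or_lt with rfl | hs0
  · simpa using hz
  have := hC.openSegment_interior_closure_subset_interior (by rwa [hO.interior_eq]) hf
  rw [hO.interior_eq] at this
  apply this
  refine ⟨1 - s / s1, s / s1, ?_, by positivity, by ring, ?_⟩
  · have : s / s1 < 1 := (div_lt_one h1).2 hs
    linarith
  · have : (s / s1) * s1 = s := by field_simp
    rw [smul_sub, smul_smul, this, sub_smul, one_smul]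
    abel

/-- Points whose backward characteristic reaches the ingoing boundary. -/
def goodSet (Ω : Set E2) (n : E2 → E2) (v : E2) : Set E2 :=
  {z | z ∈ Ω ∧ ∃ s : ℝ, 0 < s ∧ z - s • v ∈ bdryIn Ω n v}

lemma goodSet_meas {Ω : Set E2} {n : E2 → E2} (hΩ : GoodDomain Ω n) (v : E2) :
    MeasurableSet (goodSet Ω n v) := by
  obtain ⟨hO, -, hb, hSC, hn, -, -⟩ := hΩ
  have hfc : IsCompact (frontier Ω) :=
    Metric.isCompact_of_isClosed_isBounded isClosed_frontier
      (hb.closure.subset frontier_subset_closure)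
  let K : ℕ → Set E2 := fun m => frontier Ω ∩ (fun Z => ⟪v, n Z⟫_ℝ) ⁻¹' Ici (1 / ((m:ℝ) + 1))
  have hK : ∀ m, IsCompact (K m) := fun m => by
    refine hfc.of_isClosed_subset ?_ inter_subset_left
    refine ContinuousOn.preimage_isClosed_of_isClosed ?_ isClosed_frontier isClosed_Ici
    exact continuousOn_const.inner hn
  have : goodSet Ω n v = Ω ∩ ⋃ m : ℕ, ⋃ N : ℕ,
      (fun q : E2 × ℝ => q.1 + q.2 • v) '' (K m ×ˢ Icc (0:ℝ) N) := by
    ext z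
    simp only [goodSet, mem_ofPred_eq, mem_inter_iff, mem_iUnion, mem_image, mem_prod, Prod.exists]
    refine and_congr_right fun hz => ?_
    constructor
    · rintro ⟨s, hs, hf, hv⟩
      obtain ⟨m, hm⟩ := exists_nat_one_div_lt hv
      obtain ⟨N, hN⟩ := exists_nat_ge s
      exact ⟨m, N, z - s • v, s, ⟨⟨hf, hm.le⟩, hs.le, hN⟩, by simp⟩
    · rintro ⟨m, N, y, s, ⟨⟨hf, hm⟩, hs, hN⟩, rfl⟩
      have hm' : 1 / ((m:ℝ) + 1) ≤ ⟪v, n y⟫_ℝ := hm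
      have : (0:ℝ) < 1 / ((m:ℝ) + 1) := by positivity
      refine ⟨s, ?_, by simpa using hf, by simpa using this.trans_le hm'⟩
      rcases hs.eq_or_lt with rfl | h
      · exfalso
        rw [hO.frontier_eq] at hf
        exact hf.2 (by simpa using hz)
      · exact h
  rw [this]
  refine hO.measurableSet.inter (MeasurableSet.iUnion fun m => MeasurableSet.iUnion fun N => ?_)
  exact (((hK m).prod isCompact_Icc).image (by fun_prop)).measurableSet

lemma bad_sPlus {Ω : Set E2} {n : E2 → E2} {v z : E2} (hz : z ∈ Ω) (hb : z ∉ goodSet Ω n v) :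
    sPlus Ω n v z = 0 ∧ zPlus Ω n v z = z := by
  have : {s : ℝ | 0 < s ∧ z - s • v ∈ bdryIn Ω n v} = ∅ := by
    ext s
    simp only [mem_ofPred_eq, mem_empty_iff_false, iff_false]
    rintro ⟨h1, h2⟩
    exact hb ⟨hz, s, h1, h2⟩
  have h0 : sPlus Ω n v z = 0 := by rw [sPlus, this, Real.sInf_empty]
  exact ⟨h0, by rw [zPlus, h0]; simp⟩

lemma good_sPlus {Ω : Set E2} {n : E2 → E2} (hO : IsOpen Ω) (hC : Convex ℝ Ω) {v z : E2}
    (hz : z ∈ goodSet Ω n v) :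
    0 < sPlus Ω n v z ∧ (∀ s, 0 < s → (z - s • v ∈ goodSet Ω n v ↔ s < sPlus Ω n v z))
    ∧ ∀ s, 0 < s → s < sPlus Ω n v z → z - s • v ∈ Ω := by
  obtain ⟨hzΩ, s1, h1, hbd⟩ := hz
  have hcl : z - s1 • v ∈ closure Ω := frontier_subset_closure hbd.1
  have hno : ∀ s, s1 ≤ s → z - s • v ∉ Ω := by
    intro s hs hmem
    have hnf : z - s1 • v ∉ Ω := by
      have := hbd.1
      rw [hO.frontier_eq] at this
      exact this.2
    rcases hs.eq_or_lt with rfl | hs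
    · exact hnf hmem
    · exact hnf (line_geom hO hC hzΩ (h1.trans hs) (subset_closure hmem) h1.le hs)
  have hsing : {s : ℝ | 0 < s ∧ z - s • v ∈ bdryIn Ω n v} = {s1} := by
    ext s
    simp only [mem_ofPred_eq, mem_singleton_iff]
    constructor
    · rintro ⟨h0, hb⟩
      have hfr := hb.1
      have hfr1 := hbd.1
      rw [hO.frontier_eq] at hfr hfr1
      rcases lt_trichotomy s s1 with h | h | h
      · exact absurd (line_geom hO hC hzΩ h1 hcl h0.le h) hfr.2
      · exact h
      · exact absurd (line_geom hO hC hzΩ h0 hfr.1 h1.le h) hfr1.2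
    · rintro rfl
      exact ⟨h1, hbd⟩
  have hs : sPlus Ω n v z = s1 := by rw [sPlus, hsing, csInf_singleton]
  rw [hs]
  refine ⟨h1, fun s h0 => ⟨fun hg => ?_, fun hlt => ?_⟩, fun s h0 hlt =>
    line_geom hO hC hzΩ h1 hcl h0.le hlt⟩
  · by_contra hcon
    exact hno s (not_lt.1 hcon) hg.1
  · refine ⟨line_geom hO hC hzΩ h1 hcl h0.le hlt, s1 - s, by linarith, ?_⟩
    have : z - s • v - (s1 - s) • v = z - s1 • v := by rw [sub_smul]; abel
    rw [this]; exact hbd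

lemma mild_diff {Ω : Set E2} {n : E2 → E2} (hO : IsOpen Ω) (hC : Convex ℝ Ω) {v z : E2}
    (hz : z ∈ Ω) (f1 f2 G G' A B A' B' : E2 → ℝ) (hA' : Measurable A') (hB' : Measurable B')
    (C : ℝ) (hAC : ∀ z, |A' z| ≤ C) (hBC : ∀ z, |B' z| ≤ C)
    (hline : ∀ᵐ s : ℝ, z - s • v ∈ Ω → G (z - s • v) = G' (z - s • v) ∧
      A (z - s • v) = A' (z - s • v) ∧ B (z - s • v) = B' (z - s • v))
    (hG : ∀ N : ℕ, IntegrableOn (fun s : ℝ => G' (z - s • v)) (Ioo 0 (N:ℝ)))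
    (h1 : f1 z = f1 (zPlus Ω n v z) + ∫ s in (0:ℝ)..(sPlus Ω n v z),
      (G (zPlus Ω n v z + s • v) - A (zPlus Ω n v z + s • v)))
    (h2 : f2 z = f2 (zPlus Ω n v z) + ∫ s in (0:ℝ)..(sPlus Ω n v z),
      (G (zPlus Ω n v z + s • v) - B (zPlus Ω n v z + s • v)))
    (hb : f1 (zPlus Ω n v z) = f2 (zPlus Ω n v z)) :
    f1 z - f2 z = ∫ s in Ioi (0:ℝ),
      (goodSet Ω n v).indicator (fun y => B' y - A' y) (z - s • v) := by
  by_cases hgood : z ∈ goodSet Ω n v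
  swap
  · obtain ⟨h0, hz0⟩ := bad_sPlus hz hgood
    have : f1 z = f2 z := by rwa [hz0] at hb
    rw [this, sub_self, eq_comm]
    refine setIntegral_eq_zero_of_forall_eq_zero fun s hs => ?_
    refine indicator_of_notMem ?_ _
    rintro ⟨-, s', hs', hm⟩
    refine hgood ⟨hz, s + s', add_pos hs hs', ?_⟩
    rwa [add_smul, ← sub_sub]
  obtain ⟨hs0, hiff, hin⟩ := good_sPlus hO hC hgood
  set σ := sPlus Ω n v z with hσ
  have key : ∀ X X' : E2 → ℝ, (∀ᵐ s : ℝ, z - s • v ∈ Ω → X (z - s • v) = X' (z - s • v)) →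
      ∫ s in (0:ℝ)..σ, X (zPlus Ω n v z + s • v) = ∫ s in Ioo 0 σ, X' (z - s • v) := by
    intro X X' hX
    have e1 : ∀ s : ℝ, zPlus Ω n v z + s • v = z - (σ - s) • v := by
      intro s
      rw [zPlus, ← hσ, sub_smul]; abel
    simp_rw [e1]
    rw [intervalIntegral.integral_comp_sub_left (fun s => X (z - s • v)) σ, sub_self, sub_zero,
      intervalIntegral.integral_of_le hs0.le, integral_Ioc_eq_integral_Ioo]
    refine setIntegral_congr_ae measurableSet_Ioo ?_
    filter_upwards [hX] with s hs hs'
    exact hs (hin s hs'.1 hs'.2)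
  have iG : IntegrableOn (fun s : ℝ => G' (z - s • v)) (Ioo 0 σ) := by
    obtain ⟨N, hN⟩ := exists_nat_ge σ
    exact (hG N).mono_set (Ioo_subset_Ioo_right hN)
  have ibd : ∀ X : E2 → ℝ, Measurable X → (∀ z, |X z| ≤ C) →
      IntegrableOn (fun s : ℝ => X (z - s • v)) (Ioo 0 σ) := by
    intro X hX hXC
    refine Measure.integrableOn_of_bounded (M := C) (by simp) ?_ (Eventually.of_forall fun s => hXC _)
    exact (hX.comp (by fun_prop)).aestronglyMeasurable
  have iA := ibd A' hA' hAC
  have iB := ibd B' hB' hBC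
  rw [key (fun y => G y - A y) (fun y => G' y - A' y)
    (by filter_upwards [hline] with s hs h; obtain ⟨a, b, c⟩ := hs h; rw [a, b]),
    integral_sub iG iA] at h1
  rw [key (fun y => G y - B y) (fun y => G' y - B' y)
    (by filter_upwards [hline] with s hs h; obtain ⟨a, b, c⟩ := hs h; rw [a, c]),
    integral_sub iG iB] at h2
  have e3 : ∫ s in Ioi (0:ℝ), (goodSet Ω n v).indicator (fun y => B' y - A' y) (z - s • v) =
      ∫ s in Ioo 0 σ, (B' (z - s • v) - A' (z - s • v)) := by
    rw [← integral_indicator measurableSet_Ioi, ← integral_indicator measurableSet_Ioo]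
    congr 1
    funext s
    by_cases hs : 0 < s
    · have := hiff s hs
      by_cases hs2 : s < σ <;> simp [indicator, hs, hs2, this]
    · simp [indicator, hs]
  rw [e3, integral_sub iB iA, h1, h2, hb]
  ring

lemma trunc_bounds {k x : ℝ} (hk : 0 < k) (hx : 0 ≤ x) : 0 ≤ trunc k x ∧ trunc k x ≤ k := by
  unfold trunc
  refine ⟨by positivity, ?_⟩
  rw [div_le_iff₀ (by positivity), mul_add, mul_div_cancel₀ _ hk.ne']
  linarith

lemma trunc_mono {k x y : ℝ} (hk : 0 < k) (hx : 0 ≤ x) (hxy : x ≤ y) :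
    trunc k x ≤ trunc k y := by
  have hy := hx.trans hxy
  unfold trunc
  rw [div_le_div_iff₀ (by positivity) (by positivity)]
  have : x * (y / k) = y * (x / k) := by ring
  nlinarith

lemma trunc_meas (k : ℝ) : Measurable (trunc k) := by
  unfold trunc
  fun_prop

/-- the bilinear loss term -/
def lossTerm {p : ℕ} (k : ℝ) (Γ : Fin p → Fin p → Fin p → Fin p → ℝ) (a b : Fin p → E2 → ℝ)
    (i : Fin p) (z : E2) : ℝ :=
  ∑ j, ∑ l, ∑ m, Γ i j l m * (trunc k (a i z) * trunc k (b j z))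

lemma lossTerm_meas {p : ℕ} (k : ℝ) (Γ : Fin p → Fin p → Fin p → Fin p → ℝ)
    (a b : Fin p → E2 → ℝ) (ha : ∀ i, Measurable (a i)) (hb : ∀ i, Measurable (b i)) (i : Fin p) :
    Measurable (lossTerm k Γ a b i) := by
  unfold lossTerm
  refine Finset.measurable_sum _ fun j _ => Finset.measurable_sum _ fun l _ =>
    Finset.measurable_sum _ fun m _ => ?_
  exact (((trunc_meas k).comp (ha i)).mul ((trunc_meas k).comp (hb j))).const_mul _

lemma lossTerm_bdd {p : ℕ} (k : ℝ) (hk : 0 < k) (Γ : Fin p → Fin p → Fin p → Fin p → ℝ)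
    (hΓ : ∀ i j l m, 0 ≤ Γ i j l m)
    (a b : Fin p → E2 → ℝ) (ha : ∀ i z, 0 ≤ a i z) (hb : ∀ i z, 0 ≤ b i z) (i : Fin p) (z : E2) :
    |lossTerm k Γ a b i z| ≤ ∑ j, ∑ l, ∑ m, Γ i j l m * (k * k) := by
  have hx := trunc_bounds hk (ha i z)
  rw [abs_of_nonneg]
  · unfold lossTerm
    refine Finset.sum_le_sum fun j _ => Finset.sum_le_sum fun l _ => Finset.sum_le_sum fun m _ => ?_
    have hy := trunc_bounds hk (hb j z)
    exact mul_le_mul_of_nonneg_left (mul_le_mul hx.2 hy.2 hy.1 hk.le) (hΓ _ _ _ _)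
  · unfold lossTerm
    refine Finset.sum_nonneg fun j _ => Finset.sum_nonneg fun l _ => Finset.sum_nonneg fun m _ => ?_
    have hy := trunc_bounds hk (hb j z)
    exact mul_nonneg (hΓ _ _ _ _) (mul_nonneg hx.1 hy.1)

lemma lossTerm_sum {p : ℕ} (k : ℝ) (Γ : Fin p → Fin p → Fin p → Fin p → ℝ)
    (hΓ : ∀ i j l m, Γ i j l m = Γ j i l m) (a b : Fin p → E2 → ℝ) (z : E2) :
    ∑ i, lossTerm k Γ a b i z = ∑ i, lossTerm k Γ b a i z := by
  unfold lossTerm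
  rw [Finset.sum_comm]
  refine Finset.sum_congr rfl fun j _ => Finset.sum_congr rfl fun i _ =>
    Finset.sum_congr rfl fun l _ => Finset.sum_congr rfl fun m _ => ?_
  rw [hΓ i j l m]; ring

/-- Uniqueness lemma under condition (N): if `0 ≤ g ≤ h` solve the two coupled truncated
transport systems with the same source `G` and equal ingoing boundary values, then `g = h`. -/
theorem stmt7 {p : ℕ} (Ω : Set E2) (n : E2 → E2) (v : Fin p → E2)
    (Γ : Fin p → Fin p → Fin p → Fin p → ℝ)
    (hΩ : GoodDomain Ω n) (hΓ : GammaOK v Γ) (hN : CondN v)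
    (k : ℕ) (hk : 0 < k)
    (G g h : Fin p → E2 → ℝ)
    (hG : ∀ i, L1plus Ω (G i)) (hg : ∀ i, L1plus Ω (g i)) (hh : ∀ i, L1plus Ω (h i))
    (horder : ∀ i, ∀ᵐ z ∂(volume.restrict Ω), 0 ≤ g i z ∧ g i z ≤ h i z)
    (hmildh : ∀ i, ∀ᵐ z ∂(volume.restrict Ω),
      h i z = h i (zPlus Ω n (v i) z) +
        ∫ s in (0:ℝ)..(sPlus Ω n (v i) z),
          (G i (zPlus Ω n (v i) z + s • v i) -
            ∑ j, ∑ l, ∑ m, Γ i j l m *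
              (trunc (k:ℝ) (h i (zPlus Ω n (v i) z + s • v i)) *
               trunc (k:ℝ) (g j (zPlus Ω n (v i) z + s • v i)))))
    (hmildg : ∀ i, ∀ᵐ z ∂(volume.restrict Ω),
      g i z = g i (zPlus Ω n (v i) z) +
        ∫ s in (0:ℝ)..(sPlus Ω n (v i) z),
          (G i (zPlus Ω n (v i) z + s • v i) -
            ∑ j, ∑ l, ∑ m, Γ i j l m *
              (trunc (k:ℝ) (g i (zPlus Ω n (v i) z + s • v i)) *
               trunc (k:ℝ) (h j (zPlus Ω n (v i) z + s • v i)))))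
    (hbdry : ∀ i, ∀ᵐ z ∂(volume.restrict Ω),
      h i (zPlus Ω n (v i) z) = g i (zPlus Ω n (v i) z)) :
    ∀ i, ∀ᵐ z ∂(volume.restrict Ω), g i z = h i z := by
  obtain ⟨hO, -, hbdd, hSC, -, -, -⟩ := id hΩ
  have hC : Convex ℝ Ω := hSC.convex
  obtain ⟨hΓ0, hΓs, -, -⟩ := hΓ
  obtain ⟨n0, hn0⟩ := hN
  have hkr : (0:ℝ) < k := by exact_mod_cast hk
  have hΩm : MeasurableSet Ω := hO.measurableSet
  -- nonnegative measurable representatives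
  have hrep : ∀ f : E2 → ℝ, L1plus Ω f → ∃ f' : E2 → ℝ, Measurable f' ∧ (∀ z, 0 ≤ f' z) ∧
      ∀ᵐ z, z ∈ Ω → f z = f' z := by
    intro f hf
    have hm := hf.1.aestronglyMeasurable
    refine ⟨fun z => max (hm.mk f z) 0, hm.stronglyMeasurable_mk.measurable.max measurable_const,
      fun z => le_max_right _ _, ?_⟩
    have h1 := (ae_restrict_iff' hΩm).1 hm.ae_eq_mk
    have h2 := (ae_restrict_iff' hΩm).1 hf.2
    filter_upwards [h1, h2] with z a b hz
    rw [← a hz, max_eq_left (b hz)]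
  choose g' hg'm hg'0 hg'e using fun i => hrep (g i) (hg i)
  choose h' hh'm hh'0 hh'e using fun i => hrep (h i) (hh i)
  have hge : ∀ᵐ z, ∀ i, z ∈ Ω → g i z = g' i z := ae_all_iff.2 hg'e
  have hhe : ∀ᵐ z, ∀ i, z ∈ Ω → h i z = h' i z := ae_all_iff.2 hh'e
  have hord : ∀ᵐ z, ∀ i, z ∈ Ω → 0 ≤ g i z ∧ g i z ≤ h i z :=
    ae_all_iff.2 fun i => (ae_restrict_iff' hΩm).1 (horder i)
  have hbd : ∀ᵐ z, ∀ i, z ∈ Ω → h i (zPlus Ω n (v i) z) = g i (zPlus Ω n (v i) z) :=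
    ae_all_iff.2 fun i => (ae_restrict_iff' hΩm).1 (hbdry i)
  let C : Fin p → ℝ := fun i => ∑ j, ∑ l, ∑ m, Γ i j l m * ((k:ℝ) * k)
  let A : Fin p → E2 → ℝ := lossTerm (k:ℝ) Γ h' g'
  let B : Fin p → E2 → ℝ := lossTerm (k:ℝ) Γ g' h'
  have hAm : ∀ i, Measurable (A i) := lossTerm_meas _ _ _ _ hh'm hg'm
  have hBm : ∀ i, Measurable (B i) := lossTerm_meas _ _ _ _ hg'm hh'm
  have hAb : ∀ i z, |A i z| ≤ C i := lossTerm_bdd _ hkr _ hΓ0 _ _ hh'0 hg'0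
  have hBb : ∀ i z, |B i z| ≤ C i := lossTerm_bdd _ hkr _ hΓ0 _ _ hg'0 hh'0
  let S : Fin p → E2 → ℝ := fun i => (goodSet Ω n (v i)).indicator (fun y => B i y - A i y)
  have hSm : ∀ i, Measurable (S i) := fun i =>
    ((hBm i).sub (hAm i)).indicator (goodSet_meas hΩ (v i))
  have hS0 : ∀ i z, z ∉ Ω → S i z = 0 := fun i z hz => indicator_of_notMem (fun hg => hz hg.1) _
  have hSb : ∀ i z, |S i z| ≤ 2 * C i := by
    intro i z
    have a := abs_le.1 (hAb i z)
    have b := abs_le.1 (hBb i z)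
    by_cases hz : z ∈ goodSet Ω n (v i)
    · simp only [S, indicator_of_mem hz]
      rw [abs_le]; constructor <;> linarith
    · simp only [S, indicator_of_notMem hz, abs_zero]
      linarith
  have hSi : ∀ i, Integrable (S i) := by
    intro i
    have h1 : IntegrableOn (S i) Ω := Measure.integrableOn_of_bounded (M := 2 * C i)
      hbdd.measure_lt_top.ne (hSm i).aestronglyMeasurable (Eventually.of_forall fun z => hSb i z)
    have h2 : Ω.indicator (S i) = S i := by
      rw [indicator_eq_self]
      intro z hz
      by_contra hcon
      exact hz (hS0 i z hcon)
    rw [← h2]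
    exact (integrable_indicator_iff hΩm).2 h1
  -- bound on the inner product
  obtain ⟨M, hM⟩ : ∃ M : ℝ, ∀ z ∈ Ω, |⟪z, n0⟫_ℝ| ≤ M := by
    obtain ⟨R, hR⟩ := hbdd.exists_norm_le
    refine ⟨R * ‖n0‖, fun z hz => (abs_real_inner_le_norm z n0).trans ?_⟩
    exact mul_le_mul_of_nonneg_right (hR z hz) (norm_nonneg _)
  have hSM : ∀ i z, S i z ≠ 0 → |⟪z, n0⟫_ℝ| ≤ M := by
    intro i z hz
    refine hM z ?_
    by_contra hcon
    exact hz (hS0 i z hcon)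
  let D : Fin p → E2 → ℝ := fun i z => ∫ s in Ioi (0:ℝ), S i (z - s • v i)
  -- the difference is the line integral of S
  have hD : ∀ i, ∀ᵐ z, z ∈ Ω → h i z - g i z = D i z := by
    intro i
    have hP : ∀ᵐ z, z ∈ Ω → G i z = Ω.indicator (G i) z ∧
        lossTerm (k:ℝ) Γ h g i z = A i z ∧ lossTerm (k:ℝ) Γ g h i z = B i z := by
      filter_upwards [hge, hhe] with z a b hz
      refine ⟨(indicator_of_mem hz _).symm, ?_, ?_⟩
      · simp only [A, lossTerm, a _ hz, b _ hz]
      · simp only [B, lossTerm, a _ hz, b _ hz]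
    have hGi : Integrable (Ω.indicator (G i)) := (integrable_indicator_iff hΩm).2 (hG i).1
    filter_upwards [ae_line (v i) _ hP, integrable_line (v i) _ hGi,
      (ae_restrict_iff' hΩm).1 (hmildh i), (ae_restrict_iff' hΩm).1 (hmildg i), hbd]
      with z h1 h2 h3 h4 h5 hz
    exact mild_diff hO hC hz (h i) (g i) (G i) (Ω.indicator (G i)) (lossTerm (k:ℝ) Γ h g i)
      (lossTerm (k:ℝ) Γ g h i) (A i) (B i) (hAm i) (hBm i) (C i) (hAb i) (hBb i) h1 h2
      (h3 hz) (h4 hz) (h5 i hz)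
  have hDpos : ∀ i, ∀ᵐ z, 0 ≤ D i z := by
    intro i
    refine nonneg_out (v i) Ω hO (S i) ?_ (hS0 i) ?_
    · intro z
      have h1 : IntegrableOn (fun s : ℝ => S i (z - s • v i))
          (Ioc 0 ((M + ⟪z, n0⟫_ℝ) / ⟪v i, n0⟫_ℝ)) :=
        Measure.integrableOn_of_bounded (M := 2 * C i) (by simp)
          ((hSm i).comp (by fun_prop)).aestronglyMeasurable (Eventually.of_forall fun s => hSb i _)
      refine h1.of_forall_sdiff_eq_zero measurableSet_Ioi ?_
      rintro s ⟨hs, hs'⟩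
      by_contra hne
      apply hs'
      refine ⟨hs, ?_⟩
      have h2 := (abs_le.1 (hSM i _ hne)).1
      rw [inner_sub_left, real_inner_smul_left] at h2
      rw [le_div_iff₀ (hn0 i)]
      linarith
    · filter_upwards [hD i, hord] with z a b hz
      have := a hz
      have h2 := b i hz
      change 0 ≤ D i z
      linarith [h2.2]
  have hbal := fun i => balance (v i) n0 (hn0 i) (S i) (hSm i) M (hSi i) (hSM i)
  set U : Set E2 := {z | ⟪z, n0⟫_ℝ ≤ M} with hU
  have hwi : ∀ i, Integrable (fun y => S i y * (M - ⟪y, n0⟫_ℝ)) := by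
    intro i
    refine ((hSi i).norm.mul_const (2 * M)).mono
      ((hSm i).mul (by fun_prop)).aestronglyMeasurable (Eventually.of_forall fun y => ?_)
    rw [norm_mul, norm_mul, norm_norm]
    by_cases h0 : S i y = 0
    · simp [h0]
    refine mul_le_mul_of_nonneg_left ?_ (norm_nonneg _)
    have := abs_le.1 (hSM i y h0)
    rw [Real.norm_eq_abs, Real.norm_eq_abs, abs_of_nonneg (by linarith), abs_of_nonneg (by linarith)]
    linarith
  have hsum : ∑ i, ⟪v i, n0⟫_ℝ * ∫ z in U, D i z ≤ 0 := by
    have e1 : ∑ i, ⟪v i, n0⟫_ℝ * ∫ z in U, D i z = ∑ i, ∫ y, S i y * (M - ⟪y, n0⟫_ℝ) :=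
      Finset.sum_congr rfl fun i _ => (hbal i).2
    rw [e1, ← integral_finsetSum _ fun i _ => hwi i]
    refine integral_nonpos_of_ae ?_
    filter_upwards [hge, hhe, hord, hbd] with y a b c d
    change ∑ i, S i y * (M - ⟪y, n0⟫_ℝ) ≤ 0
    by_cases hy : y ∈ Ω
    swap
    · simp [hS0 _ y hy]
    rw [← Finset.sum_mul]
    refine mul_nonpos_of_nonpos_of_nonneg ?_ (by linarith [(abs_le.1 (hM y hy)).2])
    have hle : ∀ i, S i y ≤ B i y - A i y := by
      intro i
      by_cases hgd : y ∈ goodSet Ω n (v i)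
      · simp only [S, indicator_of_mem hgd, le_refl]
      · simp only [S, indicator_of_notMem hgd]
        have e := d i hy
        rw [(bad_sPlus hy hgd).2, a i hy, b i hy] at e
        rw [sub_nonneg]
        simp only [A, B, lossTerm, e]
        refine Finset.sum_le_sum fun j _ => Finset.sum_le_sum fun l _ =>
          Finset.sum_le_sum fun m _ => ?_
        refine mul_le_mul_of_nonneg_left ?_ (hΓ0 _ _ _ _)
        refine mul_le_mul_of_nonneg_left ?_ (trunc_bounds hkr (hg'0 i y)).1
        refine trunc_mono hkr (hg'0 j y) ?_
        rw [← a j hy, ← b j hy]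
        exact (c j hy).2
    calc ∑ i, S i y ≤ ∑ i, (B i y - A i y) := Finset.sum_le_sum fun i _ => hle i
      _ = 0 := by
        rw [Finset.sum_sub_distrib, sub_eq_zero]
        exact lossTerm_sum _ _ hΓs _ _ _
  have hterm : ∀ i, 0 ≤ ⟪v i, n0⟫_ℝ * ∫ z in U, D i z := fun i =>
    mul_nonneg (hn0 i).le (integral_nonneg_of_ae (ae_restrict_of_ae (hDpos i)))
  intro i
  have hz0 : ∫ z in U, D i z = 0 := by
    have h1 := (Finset.sum_eq_zero_iff_of_nonneg fun i _ => hterm i).1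
      (le_antisymm hsum (Finset.sum_nonneg fun i _ => hterm i)) i (Finset.mem_univ i)
    exact (mul_eq_zero.1 h1).resolve_left (hn0 i).ne'
  have hUm : MeasurableSet U := measurableSet_le (by fun_prop) (by fun_prop)
  have hae := (integral_eq_zero_iff_of_nonneg_ae (ae_restrict_of_ae (hDpos i)) (hbal i).1).1 hz0
  have hae' := (ae_restrict_iff' hUm).1 hae
  rw [ae_restrict_iff' hΩm]
  filter_upwards [hae', hD i] with z a b hz
  have h1 : D i z = 0 := a ((abs_le.1 (hM z hz)).2)
  have h2 := b hz
  linarith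
end
end

section
/- Let v_1,…,v_p ∈ ℝ² and Γ_{ij}^{lm} ≥ 0 be such that Γ_{ij}^{lm} > 0 implies v_i + v_j = v_l + v_m and |v_i|² + |v_j|² = |v_l|² + |v_m|². Let n_0 ∈ ℝ² be a unit vector and c_0 > max_{1≤i≤p} |v_i| be such that c_0 n_0 ∉ ∪_{1≤i≠j≤p} ( −v_j + ℝ(v_i − v_j) ). Then the shifted velocities w_i = v_i + c_0 n_0, 1 ≤ i ≤ p, satisfy: (a) Γ_{ij}^{lm} > 0 implies w_i + w_j = w_l + w_m and |w_i|² + |w_j|² = |w_l|² + |w_m|²; (b) no two of the w_i, w_j (i ≠ j) are parallel; (c) w_i·n_0 > 0 for all 1 ≤ i ≤ p. -/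
open MeasureTheory Real Set Filter Topology
open scoped InnerProductSpace ENNReal

noncomputable section

/-- Shifting a discrete velocity model by `c₀ n₀`, where `c₀` exceeds all speeds and
`c₀ n₀` avoids the lines `−v_j + ℝ(v_i − v_j)`, preserves the conservation laws and
produces a model satisfying conditions (G) and (N). -/
theorem stmt18 {p : ℕ} (v : Fin p → E2) (hv : Function.Injective v)
    (Γ : Fin p → Fin p → Fin p → Fin p → ℝ)
    (hcons : ∀ i j l m, 0 < Γ i j l m →
      v i + v j = v l + v m ∧ ‖v i‖ ^ 2 + ‖v j‖ ^ 2 = ‖v l‖ ^ 2 + ‖v m‖ ^ 2)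
    (n0 : E2) (hn0 : ‖n0‖ = 1) (c0 : ℝ) (hc0 : ∀ i, ‖v i‖ < c0)
    (hline : ∀ i j, i ≠ j → ∀ t : ℝ, c0 • n0 ≠ -v j + t • (v i - v j)) :
    (∀ i j l m, 0 < Γ i j l m →
      (v i + c0 • n0) + (v j + c0 • n0) = (v l + c0 • n0) + (v m + c0 • n0) ∧
      ‖v i + c0 • n0‖ ^ 2 + ‖v j + c0 • n0‖ ^ 2 =
        ‖v l + c0 • n0‖ ^ 2 + ‖v m + c0 • n0‖ ^ 2) ∧
    (∀ i j, i ≠ j → LinearIndependent ℝ ![v i + c0 • n0, v j + c0 • n0]) ∧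
    (∀ i, 0 < ⟪v i + c0 • n0, n0⟫_ℝ) := by
  have hpos : ∀ i, 0 < ⟪v i + c0 • n0, n0⟫_ℝ := by
    intro i
    rw [inner_add_left, real_inner_smul_left, real_inner_self_eq_norm_sq, hn0]
    have h1 := abs_real_inner_le_norm (v i) n0
    rw [hn0, mul_one] at h1
    have h2 := neg_abs_le ⟪v i, n0⟫_ℝ
    have h3 := hc0 i
    linarith
  refine ⟨?_, ?_, hpos⟩
  · intro i j l m h
    obtain ⟨h1, h2⟩ := hcons i j l m h
    have h3 : ⟪v i, c0 • n0⟫_ℝ + ⟪v j, c0 • n0⟫_ℝ = ⟪v l, c0 • n0⟫_ℝ + ⟪v m, c0 • n0⟫_ℝ := by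
      rw [← inner_add_left, ← inner_add_left, h1]
    refine ⟨?_, ?_⟩
    · rw [add_add_add_comm, h1, add_add_add_comm]
    · simp only [norm_add_sq_real]
      linarith
  · intro i j hij
    rw [LinearIndependent.pair_iff]
    intro a b hab
    have h1 : (a + b) • (v j + c0 • n0) = (-a) • (v i - v j) := by
      rw [← sub_eq_zero, ← hab]
      module
    by_cases hs : a + b = 0
    · rw [hs, zero_smul] at h1
      have hd : v i - v j ≠ 0 := sub_ne_zero.mpr (fun h => hij (hv h))
      have ha : a = 0 := by
        rcases smul_eq_zero.mp h1.symm with h | h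
        · linarith
        · exact absurd h hd
      exact ⟨ha, by linarith⟩
    · exfalso
      apply hline i j hij ((a + b)⁻¹ * (-a))
      rw [mul_smul, ← h1, smul_smul, inv_mul_cancel₀ hs, one_smul]
      abel
end
end
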